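/- arXiv:1311.4248 — 2 statements merged into one kernel-verified Lean document; each statement's English description precedes it below -/
import Mathlib

section
/- Let ω be a symplectic form on a finite-dimensional real Lie algebra 𝔤 and let J be an almost complex structure on 𝔤 compatible with ω, with associated metric g(X,Y) = ω(X,JY). If for some k ≥ 1 the term C^k𝔤 of the descending central series is J-invariant, then every vector X ∈ 𝒵 ∩ C^k𝔤 is isotropic for g, i.e. g(X,X) = 0. In particular, if 𝒵 ∩ C^k𝔤 ≠ 0, the associated metric g is neither positive nor negative definite (it is a proper pseudo-Riemannian metric). -/
/-!
Closedness of `ω`, evaluated on `A`, `B` and a central `Z`, collapses to `ω ⁅A, B⁆ Z = 0`: the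
center is `ω`-orthogonal to `⁅L, L⁆`, hence to every later term of the descending central series.
A central `X` in a `J`-invariant term is therefore orthogonal to `J X`.
-/

/-- A bilinear map on a Lie algebra is closed if its Chevalley–Eilenberg differential, with trivial
coefficients, vanishes. The sign of the defining expression is opposite to that of
`LieModule.Cohomology.d₂₃`, and alternation of the map is not part of the definition. -/
def IsLieClosed {R L M : Type*} [CommRing R] [LieRing L] [LieAlgebra R L] [AddCommGroup M]
    [Module R M] (ω : L →ₗ[R] L →ₗ[R] M) : Prop :=
  ∀ X Y Z : L, ω ⁅X, Y⁆ Z - ω ⁅X, Z⁆ Y + ω ⁅Y, Z⁆ X = 0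

namespace IsLieClosed

variable {R L M : Type*} [CommRing R] [LieRing L] [LieAlgebra R L] [AddCommGroup M] [Module R M]
  {ω : L →ₗ[R] L →ₗ[R] M}

theorem apply_lie_eq_zero_of_mem_center (hω : IsLieClosed ω) {Z : L}
    (hZ : Z ∈ LieAlgebra.center R L) (A B : L) : ω ⁅A, B⁆ Z = 0 := by
  have hcentral : ∀ A : L, ⁅A, Z⁆ = 0 := (LieModule.mem_maxTrivSubmodule R L L Z).1 hZ
  simpa only [hcentral, map_zero, LinearMap.zero_apply, sub_zero, add_zero] using hω A B Z

theorem apply_eq_zero_of_mem_lowerCentralSeries (hω : IsLieClosed ω) {Z W : L}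
    (hZ : Z ∈ LieAlgebra.center R L) {k : ℕ} (hk : 1 ≤ k)
    (hW : W ∈ LieModule.lowerCentralSeries R L L k) : ω W Z = 0 := by
  have hle : (LieModule.lowerCentralSeries R L L 1).toSubmodule ≤ LinearMap.ker (ω.flip Z) := by
    rw [LieModule.lowerCentralSeries_succ, LieSubmodule.lieIdeal_oper_eq_linear_span',
      Submodule.span_le]
    rintro _ ⟨A, -, B, -, rfl⟩
    exact hω.apply_lie_eq_zero_of_mem_center hZ A B
  exact hle (LieModule.antitone_lowerCentralSeries R L L hk hW)

end IsLieClosed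

theorem central_lcs_vectors_isotropic_general {R L : Type*} [CommRing R] [Preorder R]
    [LieRing L] [LieAlgebra R L] {ω : LinearMap.BilinForm R L} (halt : ω.IsAlt)
    (hclosed : IsLieClosed ω) {J : L → L} {k : ℕ} (hk : 1 ≤ k)
    (hJinv : ∀ x ∈ LieModule.lowerCentralSeries R L L k,
      J x ∈ LieModule.lowerCentralSeries R L L k) :
    (∀ X : L, X ∈ LieAlgebra.center R L → X ∈ LieModule.lowerCentralSeries R L L k →
      ω X (J X) = 0) ∧
    ((∃ X : L, X ∈ LieAlgebra.center R L ∧ X ∈ LieModule.lowerCentralSeries R L L k ∧ X ≠ 0) →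
      ¬ (∀ X : L, X ≠ 0 → 0 < ω X (J X)) ∧ ¬ (∀ X : L, X ≠ 0 → ω X (J X) < 0)) := by
  have isotropic : ∀ X : L, X ∈ LieAlgebra.center R L →
      X ∈ LieModule.lowerCentralSeries R L L k → ω X (J X) = 0 := fun X hX hXk =>
    halt.isRefl _ _ (hclosed.apply_eq_zero_of_mem_lowerCentralSeries hX hk (hJinv X hXk))
  refine ⟨isotropic, ?_⟩
  rintro ⟨X, hX, hXk, hX0⟩
  exact ⟨fun hpos => (hpos X hX0).ne' (isotropic X hX hXk),
    fun hneg => (hneg X hX0).ne (isotropic X hX hXk)⟩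

/-- If for some k ≥ 1 the term C^k𝔤 of the descending central series is
J-invariant, then every vector in 𝒵 ∩ C^k𝔤 is isotropic for the associated metric
g(X,Y) = ω(X,JY); in particular, if 𝒵 ∩ C^k𝔤 ≠ 0, the metric g is neither positive nor negative
definite. -/
theorem central_lcs_vectors_isotropic
    (L : Type) [LieRing L] [LieAlgebra ℝ L] [FiniteDimensional ℝ L]
    (ω : LinearMap.BilinForm ℝ L)
    (halt : ∀ X : L, ω X X = 0)
    (hnondeg : ∀ X : L, (∀ Y : L, ω X Y = 0) → X = 0)
    (hclosed : ∀ X Y Z : L, ω ⁅X, Y⁆ Z - ω ⁅X, Z⁆ Y + ω ⁅Y, Z⁆ X = 0)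
    (J : L →ₗ[ℝ] L)
    (hJ2 : ∀ X : L, J (J X) = -X)
    (hcompat : ∀ X Y : L, ω (J X) (J Y) = ω X Y)
    (g : L → L → ℝ) (hg : ∀ X Y : L, g X Y = ω X (J Y))
    (k : ℕ) (hk : 1 ≤ k)
    (hJinv : ∀ x ∈ LieModule.lowerCentralSeries ℝ L L k,
      J x ∈ LieModule.lowerCentralSeries ℝ L L k) :
    (∀ X : L, X ∈ LieAlgebra.center ℝ L → X ∈ LieModule.lowerCentralSeries ℝ L L k →
      g X X = 0) ∧
    ((∃ X : L, X ∈ LieAlgebra.center ℝ L ∧ X ∈ LieModule.lowerCentralSeries ℝ L L k ∧ X ≠ 0) →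
      ¬ (∀ X : L, X ≠ 0 → 0 < g X X) ∧ ¬ (∀ X : L, X ≠ 0 → g X X < 0)) := by
  simpa only [hg] using central_lcs_vectors_isotropic_general halt hclosed hk hJinv
end

section
/- Let ω be a symplectic form on a finite-dimensional real Lie algebra 𝔤 and let J be an almost complex structure on 𝔤 compatible with ω. If 𝔟 is a J-invariant ideal of 𝔤 contained in the center 𝒵, then ω(C¹𝔤 + J(C¹𝔤), 𝔟) = 0; that is, ω(U, W) = 0 whenever U lies in the subspace spanned by [𝔤,𝔤] and J([𝔤,𝔤]) and W ∈ 𝔟. -/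
/-!
If `W` is central, closedness of `ω` on `X, Y, W` reduces to `ω ⁅X, Y⁆ W = 0`, so the center is
orthogonal to the derived ideal. An isometry `J` with `J² = -1` is skew-adjoint, so
`ω (J U) W = -ω U (J W)`; if `W` runs over a `J`-invariant central subspace, orthogonality to the
derived ideal thus passes to its image under `J`.
-/

section Orthogonal

open LinearMap (BilinForm IsAdjointPair)

lemma orthogonalBilin_sup {R R₁ R₂ M M₁ M₂ : Type*}
    [CommSemiring R] [CommSemiring R₁] [CommSemiring R₂]
    [AddCommMonoid M] [Module R M] [AddCommMonoid M₁] [Module R₁ M₁]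
    [AddCommMonoid M₂] [Module R₂ M₂] {I₁ : R₁ →+* R} {I₂ : R₂ →+* R}
    (B : M₁ →ₛₗ[I₁] M₂ →ₛₗ[I₂] M) (S T : Submodule R₁ M₁) :
    (S ⊔ T).orthogonalBilin B = S.orthogonalBilin B ⊓ T.orthogonalBilin B := by
  refine le_antisymm (le_inf (Submodule.orthogonalBilin_le le_sup_left)
    (Submodule.orthogonalBilin_le le_sup_right)) ?_
  rintro y ⟨hyS, hyT⟩ x hx
  obtain ⟨s, hs, t, ht, rfl⟩ := Submodule.mem_sup.mp hx
  rw [map_add, LinearMap.add_apply, hyS s hs, hyT t ht, add_zero]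

lemma orthogonalBilin_map_of_isAdjointPair {R M M₁ M₂ : Type*} [CommSemiring R]
    [AddCommMonoid M] [Module R M] [AddCommMonoid M₁] [Module R M₁]
    [AddCommMonoid M₂] [Module R M₂] {I : R →+* R}
    {B : M →ₗ[R] M →ₛₗ[I] M₂} {B' : M₁ →ₗ[R] M₁ →ₛₗ[I] M₂}
    {f : M →ₗ[R] M₁} {g : M₁ →ₗ[R] M} (hfg : IsAdjointPair B B' f g) (S : Submodule R M) :
    (S.map f).orthogonalBilin B' = (S.orthogonalBilin B).comap g := by
  ext y
  simp [hfg _ y]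

lemma isSkewAdjoint_of_isOrthogonal {R M : Type*} [CommRing R] [AddCommGroup M] [Module R M]
    {B : BilinForm R M} {f : M → M} (hB : B.IsOrthogonal f) (hf : ∀ x, f (f x) = -x) :
    B.IsSkewAdjoint f := fun x y ↦
  calc
    B (f x) y = B (f (f x)) (f y) := (hB (f x) y).symm
    _ = B x ((-f) y) := by simp [hf]

end Orthogonal

section Closed

variable {R L M : Type*} [CommRing R] [LieRing L] [LieAlgebra R L] [AddCommGroup M] [Module R M]
  {ω : L →ₗ[R] L →ₗ[R] M}

lemma center_le_orthogonalBilin_lowerCentralSeries_one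
    (hclosed : ∀ X Y Z : L, ω ⁅X, Y⁆ Z - ω ⁅X, Z⁆ Y + ω ⁅Y, Z⁆ X = 0) :
    (LieAlgebra.center R L).toSubmodule ≤
      (LieModule.lowerCentralSeries R L L 1).toSubmodule.orthogonalBilin ω := by
  intro W hW
  have lie_W (X : L) : ⁅X, W⁆ = 0 := hW X
  suffices (LieModule.lowerCentralSeries R L L 1).toSubmodule ≤ LinearMap.ker (ω.flip W) from this
  rw [LieModule.lowerCentralSeries_succ, LieSubmodule.lieIdeal_oper_eq_linear_span',
    Submodule.span_le]
  rintro _ ⟨X, -, Y, -, rfl⟩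
  simpa [lie_W] using hclosed X Y W

theorem omega_derived_plus_J_derived_orthogonal_central_ideal_general
    (hclosed : ∀ X Y Z : L, ω ⁅X, Y⁆ Z - ω ⁅X, Z⁆ Y + ω ⁅Y, Z⁆ X = 0)
    {J K : L →ₗ[R] L} (hJK : LinearMap.IsAdjointPair ω ω J K) {b : Submodule R L}
    (hbK : b ≤ b.comap K) (hbZ : b ≤ (LieAlgebra.center R L).toSubmodule) :
    b ≤ ((LieModule.lowerCentralSeries R L L 1).toSubmodule ⊔
      (LieModule.lowerCentralSeries R L L 1).toSubmodule.map J).orthogonalBilin ω := by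
  have hb := hbZ.trans (center_le_orthogonalBilin_lowerCentralSeries_one hclosed)
  rw [orthogonalBilin_sup, orthogonalBilin_map_of_isAdjointPair hJK]
  exact le_inf hb (hbK.trans (Submodule.comap_mono hb))

end Closed

/-- If 𝔟 is a J-invariant ideal contained in the center 𝒵, then
ω(C¹𝔤 + J(C¹𝔤), 𝔟) = 0. -/
theorem omega_derived_plus_J_derived_orthogonal_central_ideal
    (L : Type) [LieRing L] [LieAlgebra ℝ L] [FiniteDimensional ℝ L]
    (ω : LinearMap.BilinForm ℝ L)
    (halt : ∀ X : L, ω X X = 0)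
    (hnondeg : ∀ X : L, (∀ Y : L, ω X Y = 0) → X = 0)
    (hclosed : ∀ X Y Z : L, ω ⁅X, Y⁆ Z - ω ⁅X, Z⁆ Y + ω ⁅Y, Z⁆ X = 0)
    (J : L →ₗ[ℝ] L)
    (hJ2 : ∀ X : L, J (J X) = -X)
    (hcompat : ∀ X Y : L, ω (J X) (J Y) = ω X Y)
    (b : LieIdeal ℝ L)
    (hbJ : ∀ x ∈ b, J x ∈ b)
    (hbZ : b ≤ LieAlgebra.center ℝ L) :
    ∀ U ∈ (LieModule.lowerCentralSeries ℝ L L 1).toSubmodule ⊔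
        Submodule.map J (LieModule.lowerCentralSeries ℝ L L 1).toSubmodule,
      ∀ W ∈ b, ω U W = 0 := by
  intro U hU W hW
  exact omega_derived_plus_J_derived_orthogonal_central_ideal_general hclosed (K := -J)
    (isSkewAdjoint_of_isOrthogonal hcompat hJ2) (fun x hx ↦ neg_mem (hbJ x hx)) hbZ hW U hU
end
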